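/- arXiv:1412.2206 — 2 statements merged into one kernel-verified Lean document; each statement's English description precedes it below -/
import Mathlib

section
/- For every x∈ℝ^K, Q∈Δ(L)^K, ζ∈ℝ^K and every evaluation θ, the dual game 𝒟[𝒢_θ](x,Q;ζ) has a value: w^-_θ(x,Q;ζ) = w^+_θ(x,Q;ζ). -/
open scoped BigOperators

noncomputable section RepeatedGames

/-- Probability of a finite history (list of action pairs, in chronological
order) under behavioral strategies `s`, `t` (which map the list of past action
pairs to a mixed action). -/
def probH {I J : Type*} (s : List (I × J) → I → ℝ) (t : List (I × J) → J → ℝ) :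
    List (I × J) → ℝ
  | [] => 1
  | a :: h =>
      s [] a.1 * t [] a.2 *
        probH (fun h' => s (a :: h')) (fun h' => t (a :: h')) h

/-- Expected stage payoff at stage `m+1` (i.e. after `m` completed stages). -/
def stagePay {I J : Type*} [Fintype I] [Fintype J]
    (s : List (I × J) → I → ℝ) (t : List (I × J) → J → ℝ)
    (g : I → J → ℝ) (m : ℕ) : ℝ :=
  ∑ h : Fin m → I × J,
    probH s t (List.ofFn h) *
      ∑ i, ∑ j, s (List.ofFn h) i * t (List.ofFn h) j * g i j

/-- Behavioral strategies of a player with type set `X` and action set `A`,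
observing histories in `(I × J)^*`. -/
def Strat (I J X A : Type*) [Fintype A] : Type _ :=
  {f : X → List (I × J) → A → ℝ // ∀ x h, f x h ∈ stdSimplex ℝ A}

instance {I J X A : Type*} [Fintype A] [Nonempty A] :
    Nonempty (Strat I J X A) := by
  refine ⟨⟨fun _ _ _ => (Fintype.card A : ℝ)⁻¹, fun x h => ⟨fun a => by positivity, ?_⟩⟩⟩
  have hA : (Fintype.card A : ℝ) ≠ 0 := by
    exact_mod_cast Fintype.card_ne_zero
  simp [Finset.sum_const, Finset.card_univ, nsmul_eq_mul, mul_inv_cancel₀ hA]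

/-- The auxiliary `θ`-weighted payoff `γ_θ(π, ŝ, t̂; ζ)`. -/
def payA {I J K L : Type*} [Fintype I] [Fintype J] [Fintype K] [Fintype L]
    (θ : ℕ → ℝ) (G : K → L → I → J → ℝ) (π : K × L → ℝ) (ζ : K → ℝ)
    (s : Strat I J K I) (t : Strat I J L J) : ℝ :=
  ∑ k, ∑ l, π (k, l) * ζ k *
    ∑' m : ℕ, θ m * stagePay (s.1 k) (t.1 l) (G k l) m

/-- The `θ`-weighted payoff `γ_θ(π, ŝ, t̂)`. -/
def pay {I J K L : Type*} [Fintype I] [Fintype J] [Fintype K] [Fintype L]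
    (θ : ℕ → ℝ) (G : K → L → I → J → ℝ) (π : K × L → ℝ)
    (s : Strat I J K I) (t : Strat I J L J) : ℝ :=
  payA θ G π (fun _ => 1) s t

/-- Maxmin `v⁻_θ(π)` of the repeated game `𝒢_θ(π)`. -/
def vMinus {I J K L : Type*} [Fintype I] [Fintype J] [Fintype K] [Fintype L]
    (θ : ℕ → ℝ) (G : K → L → I → J → ℝ) (π : K × L → ℝ) : ℝ :=
  ⨆ s : Strat I J K I, ⨅ t : Strat I J L J, pay θ G π s t

/-- Minmax `v⁺_θ(π)` of the repeated game `𝒢_θ(π)`. -/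
def vPlus {I J K L : Type*} [Fintype I] [Fintype J] [Fintype K] [Fintype L]
    (θ : ℕ → ℝ) (G : K → L → I → J → ℝ) (π : K × L → ℝ) : ℝ :=
  ⨅ t : Strat I J L J, ⨆ s : Strat I J K I, pay θ G π s t

/-- Dual payoff `h_θ[x,Q;ζ](p,ŝ,t̂) = γ_θ(p⊗Q, ŝ, t̂; ζ) − ⟨p,x⟩`. -/
def hDual {I J K L : Type*} [Fintype I] [Fintype J] [Fintype K] [Fintype L]
    (θ : ℕ → ℝ) (G : K → L → I → J → ℝ) (x : K → ℝ) (Q : K → L → ℝ)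
    (ζ : K → ℝ) (p : K → ℝ) (s : Strat I J K I) (t : Strat I J L J) : ℝ :=
  payA θ G (fun kl => p kl.1 * Q kl.1 kl.2) ζ s t - ∑ k, p k * x k

/-- Maxmin `w⁻_θ(x,Q;ζ)` of the dual game `𝒟[𝒢_θ](x,Q;ζ)`. -/
def wMinus {I J K L : Type*} [Fintype I] [Fintype J] [Fintype K] [Fintype L]
    (θ : ℕ → ℝ) (G : K → L → I → J → ℝ) (x : K → ℝ) (Q : K → L → ℝ)
    (ζ : K → ℝ) : ℝ :=
  ⨆ ps : stdSimplex ℝ K × Strat I J K I, ⨅ t : Strat I J L J,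
    hDual θ G x Q ζ (ps.1 : K → ℝ) ps.2 t

/-- Minmax `w⁺_θ(x,Q;ζ)` of the dual game `𝒟[𝒢_θ](x,Q;ζ)`. -/
def wPlus {I J K L : Type*} [Fintype I] [Fintype J] [Fintype K] [Fintype L]
    (θ : ℕ → ℝ) (G : K → L → I → J → ℝ) (x : K → ℝ) (Q : K → L → ℝ)
    (ζ : K → ℝ) : ℝ :=
  ⨅ t : Strat I J L J, ⨆ ps : stdSimplex ℝ K × Strat I J K I,
    hDual θ G x Q ζ (ps.1 : K → ℝ) ps.2 t

end RepeatedGames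

/-!
The payoff is not bilinear in behavioral strategies, but it is in their realization plans (von
Stengel's sequence form): the weights which a strategy puts on its own actions along each history.
Realization plans form a compact convex set cut out by linear flow constraints, and by Kuhn's
theorem each of them comes from a behavioral strategy. Player 1's choice of `p` is absorbed by
scaling the plan of each type `k` by `p k`, so that `p` is read off as the mass at the empty history
and the dual payoff becomes affine in each player's plans. Since total masses are at most one, stage
payoffs are uniformly bounded, so the weighted payoff is continuous in the product topology and
Sion's minimax theorem applies.
-/

open Set

section Minimax

theorem iSup_iInf_eq_iInf_iSup_of_saddlePoint {S T : Type*} {f : S → T → ℝ} {a : S} {b : T}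
    (hsaddle : ∀ s t, f s b ≤ f a t) (hbelow : ∀ s, BddBelow (range (f s)))
    (habove : ∀ t, BddAbove (range fun s => f s t)) :
    ⨆ s, ⨅ t, f s t = ⨅ t, ⨆ s, f s t := by
  have : Nonempty S := ⟨a⟩
  have : Nonempty T := ⟨b⟩
  have iInf_bddAbove : BddAbove (range fun s => ⨅ t, f s t) :=
    ⟨f a b, forall_mem_range.2 fun s => (ciInf_le (hbelow s) b).trans (hsaddle s b)⟩
  have iSup_bddBelow : BddBelow (range fun t => ⨆ s, f s t) :=
    ⟨f a b, forall_mem_range.2 fun t => (hsaddle a t).trans (le_ciSup (habove t) a)⟩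
  apply le_antisymm
  · exact ciSup_le fun s => le_ciInf fun t => (ciInf_le (hbelow s) t).trans (le_ciSup (habove t) s)
  · calc ⨅ t, ⨆ s, f s t ≤ ⨆ s, f s b := ciInf_le iSup_bddBelow b
      _ ≤ ⨅ t, f a t := ciSup_le fun s => le_ciInf (hsaddle s)
      _ ≤ ⨆ s, ⨅ t, f s t := le_ciSup iInf_bddAbove a

variable {E F S T : Type*}
  [TopologicalSpace E] [AddCommGroup E] [IsTopologicalAddGroup E] [Module ℝ E] [ContinuousSMul ℝ E]
  [TopologicalSpace F] [AddCommGroup F] [IsTopologicalAddGroup F] [Module ℝ F] [ContinuousSMul ℝ F]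

theorem iSup_iInf_eq_iInf_iSup_of_concaveOn_convexOn [Nonempty S] [Nonempty T]
    {X : Set E} {Y : Set F} {σ : S → E} {τ : T → F} {f : E → F → ℝ}
    (hσ : range σ = X) (hτ : range τ = Y) (hX : IsCompact X) (hY : IsCompact Y)
    (hcont_left : ∀ y ∈ Y, ContinuousOn (f · y) X) (hcont_right : ∀ x ∈ X, ContinuousOn (f x) Y)
    (hconcave : ∀ y ∈ Y, ConcaveOn ℝ X (f · y)) (hconvex : ∀ x ∈ X, ConvexOn ℝ Y (f x)) :
    ⨆ s, ⨅ t, f (σ s) (τ t) = ⨅ t, ⨆ s, f (σ s) (τ t) := by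
  subst hσ hτ
  obtain ⟨_, ⟨b, rfl⟩, _, ⟨a, rfl⟩, hsaddle⟩ :=
    Sion.exists_isSaddlePointOn (f := fun y x => f x y) (range_nonempty τ)
      (hconvex _ (mem_range_self (Classical.arbitrary S))).1 hY
      (fun x hx => (hcont_right x hx).lowerSemicontinuousOn)
      (fun x hx => (hconvex x hx).quasiconvexOn)
      (hconcave _ (mem_range_self (Classical.arbitrary T))).1 (range_nonempty σ) hX
      (fun y hy => (hcont_left y hy).upperSemicontinuousOn)
      (fun y hy => (hconcave y hy).quasiconcaveOn)
  apply iSup_iInf_eq_iInf_iSup_of_saddlePoint (a := a) (b := b)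
  · exact fun s t => hsaddle _ (mem_range_self t) _ (mem_range_self s)
  · intro s
    have := hY.bddBelow_image (hcont_right _ (mem_range_self s))
    rwa [← range_comp] at this
  · intro t
    have := hX.bddAbove_image (hcont_left _ (mem_range_self t))
    rwa [← range_comp] at this

end Minimax

section RealizationPlan

variable {E A : Type*} (pr : E → A)

/-- The realization weight of a history under a behavioral strategy `s`: the product of the
probabilities that `s` gives to the player's own actions along it. A step of play is an element of
`E`, and `pr` reads off the player's action in it. -/
def reachWeight (s : List E → A → ℝ) : List E → ℝ
  | [] => 1
  | e :: h => s [] (pr e) * reachWeight (fun h' => s (e :: h')) h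

theorem reachWeight_append_singleton (s : List E → A → ℝ) (h : List E) (e : E) :
    reachWeight pr s (h ++ [e]) = reachWeight pr s h * s h (pr e) := by
  induction h generalizing s with
  | nil => simp [reachWeight]
  | cons e' h ih => simp [reachWeight, ih, mul_assoc]

theorem reachWeight_nonneg {s : List E → A → ℝ} (hs : ∀ h a, 0 ≤ s h a) (h : List E) :
    0 ≤ reachWeight pr s h := by
  induction h generalizing s with
  | nil => simp [reachWeight]
  | cons e h ih => exact mul_nonneg (hs _ _) (ih fun _ _ => hs _ _)

/-- The realization plan of a behavioral strategy, i.e. its sequence form: the realization weight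
of each history extended by one further action of the player. -/
def realization (s : List E → A → ℝ) (h : List E) (a : A) : ℝ :=
  reachWeight pr s h * s h a

theorem probH_eq_reachWeight_mul {I J : Type*} (s : List (I × J) → I → ℝ)
    (t : List (I × J) → J → ℝ) (h : List (I × J)) :
    probH s t h = reachWeight Prod.fst s h * reachWeight Prod.snd t h := by
  induction h generalizing s t with
  | nil => simp [probH, reachWeight]
  | cons e h ih => simp only [probH, reachWeight, ih]; ring

variable [Fintype A]

/-- The polytope of realization plans, cut out by the linear constraints of the sequence form.
The total mass at the empty history is only required to be at most `1`, since a plan is weighted by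
the probability of the type that uses it. -/
def realizationPlans : Set (List E → A → ℝ) :=
  {ξ | (∀ h a, 0 ≤ ξ h a) ∧ ∑ a, ξ [] a ≤ 1 ∧ ∀ h e, ∑ a, ξ (h ++ [e]) a = ξ h (pr e)}

variable {pr}

theorem sum_le_one_of_mem_realizationPlans {ξ : List E → A → ℝ} (hξ : ξ ∈ realizationPlans pr)
    (h : List E) : ∑ a, ξ h a ≤ 1 := by
  obtain ⟨nonneg, root, flow⟩ := hξ
  induction h using List.reverseRecOn with
  | nil => exact root
  | append_singleton h e ih =>
    rw [flow]
    exact (Finset.single_le_sum (fun a _ => nonneg h a) (Finset.mem_univ _)).trans ih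

theorem mem_Icc_of_mem_realizationPlans {ξ : List E → A → ℝ} (hξ : ξ ∈ realizationPlans pr)
    (h : List E) (a : A) : ξ h a ∈ Icc (0 : ℝ) 1 :=
  ⟨hξ.1 h a, (Finset.single_le_sum (fun a _ => hξ.1 h a) (Finset.mem_univ a)).trans
    (sum_le_one_of_mem_realizationPlans hξ h)⟩

variable (pr)

theorem convex_realizationPlans : Convex ℝ (realizationPlans pr) := by
  rintro ξ ⟨nonneg, root, flow⟩ ξ' ⟨nonneg', root', flow'⟩ a b ha hb hab
  refine ⟨fun h i => ?_, ?_, fun h e => ?_⟩ <;>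
    simp only [Pi.add_apply, Pi.smul_apply, smul_eq_mul, Finset.sum_add_distrib, ← Finset.mul_sum]
  · exact add_nonneg (mul_nonneg ha (nonneg h i)) (mul_nonneg hb (nonneg' h i))
  · nlinarith
  · rw [flow, flow']

theorem isClosed_realizationPlans : IsClosed (realizationPlans pr) := by
  simp only [realizationPlans, ofPred_and, ofPred_forall]
  refine .inter (isClosed_iInter fun h => isClosed_iInter fun a => ?_)
    (.inter ?_ (isClosed_iInter fun h => isClosed_iInter fun e => ?_))
  · exact isClosed_le (by fun_prop) (by fun_prop)
  · exact isClosed_le (by fun_prop) (by fun_prop)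
  · exact isClosed_eq (by fun_prop) (by fun_prop)

theorem isCompact_realizationPlans : IsCompact (realizationPlans pr) :=
  (isCompact_univ_pi fun _ => isCompact_univ_pi fun _ => isCompact_Icc).of_isClosed_subset
    (isClosed_realizationPlans pr)
    fun _ hξ h _ a _ => mem_Icc_of_mem_realizationPlans hξ h a

theorem sum_realization_nil {s : List E → A → ℝ} (hs : ∀ h, s h ∈ stdSimplex ℝ A) :
    ∑ a, realization pr s [] a = 1 := by
  simp [realization, reachWeight, (hs []).2]

theorem smul_realization_mem_realizationPlans {s : List E → A → ℝ}
    (hs : ∀ h, s h ∈ stdSimplex ℝ A) {c : ℝ} (hc : c ∈ Icc (0 : ℝ) 1) :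
    c • realization pr s ∈ realizationPlans pr := by
  refine ⟨fun h a => ?_, ?_, fun h e => ?_⟩
  · exact mul_nonneg hc.1 (mul_nonneg (reachWeight_nonneg pr (fun h => (hs h).1) h) ((hs h).1 a))
  · simpa only [Pi.smul_apply, smul_eq_mul, ← Finset.mul_sum, sum_realization_nil pr hs, mul_one]
      using hc.2
  · simp only [Pi.smul_apply, smul_eq_mul, realization, ← Finset.mul_sum, (hs _).2, mul_one,
      reachWeight_append_singleton]

theorem exists_mem_stdSimplex_eq_sum_mul [Nonempty A] {v : A → ℝ} (hv : ∀ a, 0 ≤ v a) :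
    ∃ w ∈ stdSimplex ℝ A, ∀ a, v a = (∑ b, v b) * w a := by
  classical
  by_cases hsum : ∑ b, v b = 0
  · refine ⟨Pi.single (Classical.arbitrary A) 1, single_mem_stdSimplex ℝ _, fun a => ?_⟩
    rw [hsum, zero_mul]
    exact (Finset.sum_eq_zero_iff_of_nonneg fun a _ => hv a).1 hsum a (Finset.mem_univ a)
  · refine ⟨fun a => v a / ∑ b, v b,
      ⟨fun a => div_nonneg (hv a) (Finset.sum_nonneg fun b _ => hv b), ?_⟩, fun a => ?_⟩
    · rw [← Finset.sum_div, div_self hsum]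
    · rw [mul_div_cancel₀ _ hsum]

/-- Kuhn's theorem in sequence form: normalizing the weights at each history recovers a strategy. -/
theorem exists_eq_smul_realization [Nonempty A] {ξ : List E → A → ℝ}
    (hξ : ξ ∈ realizationPlans pr) :
    ∃ s : List E → A → ℝ, (∀ h, s h ∈ stdSimplex ℝ A) ∧
      ξ = (∑ a, ξ [] a) • realization pr s := by
  obtain ⟨nonneg, -, flow⟩ := hξ
  choose s hs hξs using fun h => exists_mem_stdSimplex_eq_sum_mul (nonneg h)
  have sum_eq_mul_reachWeight (h : List E) :
      ∑ a, ξ h a = (∑ a, ξ [] a) * reachWeight pr s h := by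
    induction h using List.reverseRecOn with
    | nil => simp [reachWeight]
    | append_singleton h e ih =>
      rw [flow, hξs, ih, reachWeight_append_singleton, mul_assoc]
  refine ⟨s, hs, funext₂ fun h a => ?_⟩
  rw [hξs, sum_eq_mul_reachWeight, mul_assoc]
  rfl

end RealizationPlan

section TypedPlan

variable {I J X A : Type*} [Fintype A] (pr : I × J → A)

/-- Families of realization plans indexed by the player's type whose vector of total masses, the
probabilities of the types, lies in `P`. -/
def typedPlans (P : Set (X → ℝ)) : Set (X → List (I × J) → A → ℝ) :=
  {ξ | (∀ x, ξ x ∈ realizationPlans pr) ∧ (fun x => ∑ a, ξ x [] a) ∈ P}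

/-- The family of realization plans of a strategy, each scaled by the weight `p` of its type. -/
def weightedPlan (p : X → ℝ) (s : Strat I J X A) : X → List (I × J) → A → ℝ :=
  fun x => p x • realization pr (s.1 x)

variable {pr} in
theorem convex_typedPlans {P : Set (X → ℝ)} (hP : Convex ℝ P) : Convex ℝ (typedPlans pr P) := by
  rintro ξ ⟨hξ, hmass⟩ ξ' ⟨hξ', hmass'⟩ a b ha hb hab
  refine ⟨fun x => convex_realizationPlans pr (hξ x) (hξ' x) ha hb hab, ?_⟩
  convert hP hmass hmass' ha hb hab using 1
  ext x
  simp [Finset.sum_add_distrib, Finset.mul_sum]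

theorem isCompact_typedPlans {P : Set (X → ℝ)} (hP : IsClosed P) :
    IsCompact (typedPlans pr P) := by
  have mass_continuous : Continuous fun (ξ : X → List (I × J) → A → ℝ) x => ∑ a, ξ x [] a := by
    fun_prop
  convert (isCompact_univ_pi fun _ : X => isCompact_realizationPlans pr).inter_right
    (hP.preimage mass_continuous) using 1
  ext ξ
  simp [typedPlans]

theorem sum_weightedPlan_nil (p : X → ℝ) (s : Strat I J X A) (x : X) :
    ∑ a, weightedPlan pr p s x [] a = p x := by
  simp [weightedPlan, ← Finset.mul_sum, sum_realization_nil pr (s.2 x)]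

theorem weightedPlan_mem_typedPlans {P : Set (X → ℝ)} {p : X → ℝ} (hp : p ∈ P)
    (hp01 : p ∈ Icc 0 1) (s : Strat I J X A) : weightedPlan pr p s ∈ typedPlans pr P :=
  ⟨fun x => smul_realization_mem_realizationPlans pr (s.2 x) ⟨hp01.1 x, hp01.2 x⟩,
    by simpa only [sum_weightedPlan_nil] using hp⟩

theorem exists_eq_weightedPlan [Nonempty A] {P : Set (X → ℝ)} {ξ : X → List (I × J) → A → ℝ}
    (hξ : ξ ∈ typedPlans pr P) : ∃ p ∈ P, ∃ s : Strat I J X A, weightedPlan pr p s = ξ := by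
  choose s hs hξs using fun x => exists_eq_smul_realization pr (hξ.1 x)
  exact ⟨_, hξ.2, ⟨s, hs⟩, funext fun x => (hξs x).symm⟩

theorem range_weightedPlan_stdSimplex [Fintype X] [Nonempty A] :
    (range fun ps : stdSimplex ℝ X × Strat I J X A => weightedPlan pr ps.1 ps.2) =
      typedPlans pr (stdSimplex ℝ X) := by
  refine Subset.antisymm (range_subset_iff.2 fun ps => ?_) fun ξ hξ => ?_
  · exact weightedPlan_mem_typedPlans pr ps.1.2
      ⟨ps.1.2.1, fun x => (mem_Icc_of_mem_stdSimplex ps.1.2 x).2⟩ ps.2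
  · obtain ⟨p, hp, s, rfl⟩ := exists_eq_weightedPlan pr hξ
    exact ⟨(⟨p, hp⟩, s), rfl⟩

theorem range_weightedPlan_one [Nonempty A] :
    range (weightedPlan (X := X) pr 1) = typedPlans pr {1} := by
  refine Subset.antisymm (range_subset_iff.2 fun s => ?_) fun ξ hξ => ?_
  · exact weightedPlan_mem_typedPlans pr (mem_singleton 1) ⟨zero_le_one, le_rfl⟩ s
  · obtain ⟨_, rfl, s, rfl⟩ := exists_eq_weightedPlan pr hξ
    exact ⟨s, rfl⟩

end TypedPlan

section PlanPayoff

variable {I J : Type*} [Fintype I] [Fintype J]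

/-- The expected payoff after `m` completed stages, as a bilinear form in the realization plans of
the two players. -/
def planStagePay (g : I → J → ℝ) (m : ℕ) (ξ : List (I × J) → I → ℝ) (η : List (I × J) → J → ℝ) :
    ℝ :=
  ∑ h : Fin m → I × J, ∑ i, ∑ j, ξ (List.ofFn h) i * η (List.ofFn h) j * g i j

/-- The `θ`-weighted sum of the stage payoffs of two realization plans. -/
noncomputable def planPay (θ : ℕ → ℝ) (g : I → J → ℝ) (ξ : List (I × J) → I → ℝ)
    (η : List (I × J) → J → ℝ) : ℝ :=
  ∑' m, θ m * planStagePay g m ξ η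

theorem planStagePay_realization (g : I → J → ℝ) (m : ℕ) (s : List (I × J) → I → ℝ)
    (t : List (I × J) → J → ℝ) :
    planStagePay g m (realization Prod.fst s) (realization Prod.snd t) = stagePay s t g m := by
  simp only [planStagePay, stagePay, probH_eq_reachWeight_mul, realization, Finset.mul_sum]
  refine Fintype.sum_congr _ _ fun h => Fintype.sum_congr _ _ fun i =>
    Fintype.sum_congr _ _ fun j => ?_
  ring

theorem planPay_realization (θ : ℕ → ℝ) (g : I → J → ℝ) (s : List (I × J) → I → ℝ)
    (t : List (I × J) → J → ℝ) :
    planPay θ g (realization Prod.fst s) (realization Prod.snd t) =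
      ∑' m, θ m * stagePay s t g m := by
  simp only [planPay, planStagePay_realization]

theorem planStagePay_smul_add_smul_left (g : I → J → ℝ) (m : ℕ) (a b : ℝ)
    (ξ ξ' : List (I × J) → I → ℝ) (η : List (I × J) → J → ℝ) :
    planStagePay g m (a • ξ + b • ξ') η =
      a * planStagePay g m ξ η + b * planStagePay g m ξ' η := by
  simp only [planStagePay, Pi.add_apply, Pi.smul_apply, smul_eq_mul, add_mul, mul_assoc,
    Finset.sum_add_distrib, Finset.mul_sum]

theorem planStagePay_smul_add_smul_right (g : I → J → ℝ) (m : ℕ) (a b : ℝ)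
    (ξ : List (I × J) → I → ℝ) (η η' : List (I × J) → J → ℝ) :
    planStagePay g m ξ (a • η + b • η') =
      a * planStagePay g m ξ η + b * planStagePay g m ξ η' := by
  simp only [planStagePay, Pi.add_apply, Pi.smul_apply, smul_eq_mul, mul_add, add_mul, mul_assoc,
    mul_left_comm _ a, mul_left_comm _ b, Finset.sum_add_distrib, Finset.mul_sum]

theorem planPay_smul_left (θ : ℕ → ℝ) (g : I → J → ℝ) (c : ℝ) (ξ : List (I × J) → I → ℝ)
    (η : List (I × J) → J → ℝ) : planPay θ g (c • ξ) η = c * planPay θ g ξ η := by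
  have stage_smul (m : ℕ) : planStagePay g m (c • ξ) η = c * planStagePay g m ξ η := by
    simpa using planStagePay_smul_add_smul_left g m c 0 ξ 0 η
  simp only [planPay, stage_smul, mul_left_comm _ c, tsum_mul_left]

section Bounds

variable {ξ : List (I × J) → I → ℝ} {η : List (I × J) → J → ℝ}

theorem sum_ofFn_mul_le_one (hξ : ξ ∈ realizationPlans Prod.fst)
    (hη : η ∈ realizationPlans Prod.snd) (m : ℕ) :
    ∑ h : Fin m → I × J, (∑ i, ξ (List.ofFn h) i) * ∑ j, η (List.ofFn h) j ≤ 1 := by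
  induction m with
  | zero =>
    simpa using mul_le_one₀ hξ.2.1 (Finset.sum_nonneg fun j _ => hη.1 [] j) hη.2.1
  | succ m ih =>
    refine Eq.trans_le ?_ ih
    rw [← (Fin.snocEquiv fun _ => I × J).sum_comp, Fintype.sum_prod_type_right]
    refine Fintype.sum_congr _ _ fun h => ?_
    simp only [Fin.snocEquiv, Equiv.coe_fn_mk, List.ofFn_succ', Fin.snoc_castSucc, Fin.snoc_last,
      List.concat_eq_append, hξ.2.2, hη.2.2, Fintype.sum_mul_sum, Fintype.sum_prod_type]

theorem abs_planStagePay_le (hξ : ξ ∈ realizationPlans Prod.fst)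
    (hη : η ∈ realizationPlans Prod.snd) (g : I → J → ℝ) (m : ℕ) :
    |planStagePay g m ξ η| ≤ ∑ i, ∑ j, |g i j| := by
  have abs_le_sum (i : I) (j : J) : |g i j| ≤ ∑ i, ∑ j, |g i j| :=
    (Finset.single_le_sum (f := fun j => |g i j|) (fun _ _ => abs_nonneg _)
      (Finset.mem_univ j)).trans
    (Finset.single_le_sum (f := fun i => ∑ j, |g i j|)
      (fun _ _ => Finset.sum_nonneg fun _ _ => abs_nonneg _) (Finset.mem_univ i))
  set C := ∑ i, ∑ j, |g i j|
  have C_nonneg : 0 ≤ C := Finset.sum_nonneg fun _ _ => Finset.sum_nonneg fun _ _ => abs_nonneg _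
  calc |planStagePay g m ξ η|
      ≤ ∑ h : Fin m → I × J, ∑ i, ∑ j, |ξ (List.ofFn h) i * η (List.ofFn h) j * g i j| :=
        (Finset.abs_sum_le_sum_abs _ _).trans <| Finset.sum_le_sum fun h _ =>
          (Finset.abs_sum_le_sum_abs _ _).trans <| Finset.sum_le_sum fun i _ =>
            Finset.abs_sum_le_sum_abs _ _
    _ ≤ ∑ h : Fin m → I × J, ∑ i, ∑ j, ξ (List.ofFn h) i * η (List.ofFn h) j * C := by
        gcongr with h _ i _ j _
        have weight_nonneg := mul_nonneg (hξ.1 (List.ofFn h) i) (hη.1 (List.ofFn h) j)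
        rw [abs_mul, abs_of_nonneg weight_nonneg]
        exact mul_le_mul_of_nonneg_left (abs_le_sum i j) weight_nonneg
    _ = (∑ h : Fin m → I × J, (∑ i, ξ (List.ofFn h) i) * ∑ j, η (List.ofFn h) j) * C := by
        simp only [Fintype.sum_mul_sum, ← Finset.sum_mul]
    _ ≤ C := mul_le_of_le_one_left C_nonneg (sum_ofFn_mul_le_one hξ hη m)

theorem norm_mul_planStagePay_le (θ : ℕ → ℝ) (hξ : ξ ∈ realizationPlans Prod.fst)
    (hη : η ∈ realizationPlans Prod.snd) (g : I → J → ℝ) (m : ℕ) :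
    ‖θ m * planStagePay g m ξ η‖ ≤ |θ m| * ∑ i, ∑ j, |g i j| := by
  rw [Real.norm_eq_abs, abs_mul]
  exact mul_le_mul_of_nonneg_left (abs_planStagePay_le hξ hη g m) (abs_nonneg _)

variable {θ : ℕ → ℝ} (hθ : Summable θ) (g : I → J → ℝ)
include hθ

theorem summable_mul_planStagePay (hξ : ξ ∈ realizationPlans Prod.fst)
    (hη : η ∈ realizationPlans Prod.snd) : Summable fun m => θ m * planStagePay g m ξ η :=
  .of_norm_bounded (hθ.abs.mul_right _) (norm_mul_planStagePay_le θ hξ hη g)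

theorem planPay_smul_add_smul_left {ξ' : List (I × J) → I → ℝ} (hξ : ξ ∈ realizationPlans Prod.fst)
    (hξ' : ξ' ∈ realizationPlans Prod.fst) (hη : η ∈ realizationPlans Prod.snd) (a b : ℝ) :
    planPay θ g (a • ξ + b • ξ') η = a * planPay θ g ξ η + b * planPay θ g ξ' η := by
  simp only [planPay, planStagePay_smul_add_smul_left, mul_add, mul_left_comm (θ _)]
  rw [Summable.tsum_add ((summable_mul_planStagePay hθ g hξ hη).mul_left a)
    ((summable_mul_planStagePay hθ g hξ' hη).mul_left b), tsum_mul_left, tsum_mul_left]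

theorem planPay_smul_add_smul_right {η' : List (I × J) → J → ℝ} (hξ : ξ ∈ realizationPlans Prod.fst)
    (hη : η ∈ realizationPlans Prod.snd) (hη' : η' ∈ realizationPlans Prod.snd) (a b : ℝ) :
    planPay θ g ξ (a • η + b • η') = a * planPay θ g ξ η + b * planPay θ g ξ η' := by
  simp only [planPay, planStagePay_smul_add_smul_right, mul_add, mul_left_comm (θ _)]
  rw [Summable.tsum_add ((summable_mul_planStagePay hθ g hξ hη).mul_left a)
    ((summable_mul_planStagePay hθ g hξ hη').mul_left b), tsum_mul_left, tsum_mul_left]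

theorem continuousOn_planPay :
    ContinuousOn (Function.uncurry (planPay θ g))
      (realizationPlans Prod.fst ×ˢ realizationPlans Prod.snd) := by
  refine continuousOn_tsum (fun m => ?_) (hθ.abs.mul_right _)
    fun m z hz => norm_mul_planStagePay_le θ hz.1 hz.2 g m
  unfold planStagePay
  fun_prop

end Bounds

end PlanPayoff

section DualPayoff

variable {K L I J : Type*} [Fintype K] [Fintype L] [Fintype I] [Fintype J]
  (θ : ℕ → ℝ) (G : K → L → I → J → ℝ) (x : K → ℝ) (Q : K → L → ℝ) (ζ : K → ℝ)

/-- The payoff of the dual game in terms of realization plans. The law `p` chosen by player 1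
is the vector of total masses of her plans. -/
noncomputable def planDualPay (ξ : K → List (I × J) → I → ℝ) (η : L → List (I × J) → J → ℝ) : ℝ :=
  ∑ k, (∑ l, Q k l * ζ k * planPay θ (G k l) (ξ k) (η l) - (∑ i, ξ k [] i) * x k)

theorem planDualPay_weightedPlan (p : K → ℝ) (s : Strat I J K I) (t : Strat I J L J) :
    planDualPay θ G x Q ζ (weightedPlan Prod.fst p s) (weightedPlan Prod.snd 1 t) =
      hDual θ G x Q ζ p s t := by
  simp only [planDualPay, sum_weightedPlan_nil, hDual, payA, Finset.sum_sub_distrib]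
  congr 1
  refine Fintype.sum_congr _ _ fun k => Fintype.sum_congr _ _ fun l => ?_
  simp only [weightedPlan, Pi.one_apply, one_smul, planPay_smul_left, planPay_realization]
  ring

variable {θ} (hθ : Summable θ) {P : Set (K → ℝ)} {R : Set (L → ℝ)}
include hθ

theorem continuousOn_planDualPay :
    ContinuousOn (Function.uncurry (planDualPay θ G x Q ζ))
      (typedPlans (Prod.fst : I × J → I) P ×ˢ typedPlans (Prod.snd : I × J → J) R) := by
  refine continuousOn_finsetSum _ fun k _ => .sub (continuousOn_finsetSum _ fun l _ => ?_)
    (by fun_prop)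
  exact continuousOn_const.mul ((continuousOn_planPay hθ (G k l)).comp
    (f := fun z : (K → List (I × J) → I → ℝ) × (L → List (I × J) → J → ℝ) => (z.1 k, z.2 l))
    (by fun_prop) fun z hz => ⟨hz.1.1 k, hz.2.1 l⟩)

theorem concaveOn_planDualPay_left (hP : Convex ℝ P) {η : L → List (I × J) → J → ℝ}
    (hη : η ∈ typedPlans Prod.snd R) :
    ConcaveOn ℝ (typedPlans Prod.fst P) fun ξ => planDualPay θ G x Q ζ ξ η := by
  refine ⟨convex_typedPlans hP, fun ξ hξ ξ' hξ' a b _ _ _ => le_of_eq ?_⟩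
  simp only [planDualPay, Pi.add_apply, Pi.smul_apply,
    planPay_smul_add_smul_left hθ _ (hξ.1 _) (hξ'.1 _) (hη.1 _), smul_eq_mul, Finset.mul_sum,
    ← Finset.sum_add_distrib]
  refine Fintype.sum_congr _ _ fun k => ?_
  simp only [Finset.sum_add_distrib, mul_add, mul_left_comm _ a, mul_left_comm _ b,
    ← Finset.mul_sum]
  ring

theorem convexOn_planDualPay_right (hR : Convex ℝ R) {ξ : K → List (I × J) → I → ℝ}
    (hξ : ξ ∈ typedPlans Prod.fst P) :
    ConvexOn ℝ (typedPlans Prod.snd R) (planDualPay θ G x Q ζ ξ) := by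
  refine ⟨convex_typedPlans hR, fun η hη η' hη' a b _ _ hab => le_of_eq ?_⟩
  simp only [planDualPay, Pi.add_apply, Pi.smul_apply,
    planPay_smul_add_smul_right hθ _ (hξ.1 _) (hη.1 _) (hη'.1 _), smul_eq_mul, Finset.mul_sum,
    ← Finset.sum_add_distrib]
  refine Fintype.sum_congr _ _ fun k => ?_
  simp only [Finset.sum_add_distrib, mul_add, mul_left_comm _ a, mul_left_comm _ b,
    ← Finset.mul_sum]
  linear_combination (∑ i, ξ k [] i) * x k * hab

end DualPayoff

theorem stmt_11_general
    {K L I J : Type*} [Fintype K] [Fintype L] [Fintype I] [Fintype J]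
    [Nonempty K] [Nonempty I] [Nonempty J]
    (G : K → L → I → J → ℝ) {θ : ℕ → ℝ} (hθ : Summable θ)
    (x : K → ℝ) (Q : K → L → ℝ) (ζ : K → ℝ) :
    wMinus (I := I) (J := J) θ G x Q ζ = wPlus (I := I) (J := J) θ G x Q ζ := by
  simp only [wMinus, wPlus, ← planDualPay_weightedPlan]
  have cont := continuousOn_planDualPay G x Q ζ hθ (I := I) (J := J)
    (P := stdSimplex ℝ K) (R := {1})
  apply iSup_iInf_eq_iInf_iSup_of_concaveOn_convexOn
    (range_weightedPlan_stdSimplex Prod.fst) (range_weightedPlan_one Prod.snd)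
    (f := planDualPay θ G x Q ζ)
  · exact isCompact_typedPlans _ (isClosed_stdSimplex ℝ K)
  · exact isCompact_typedPlans _ isClosed_singleton
  · exact fun η hη => cont.uncurry_right η hη
  · exact fun ξ hξ => cont.uncurry_left ξ hξ
  · exact fun η hη => concaveOn_planDualPay_left G x Q ζ hθ (convex_stdSimplex ℝ K) hη
  · exact fun ξ hξ => convexOn_planDualPay_right G x Q ζ hθ (convex_singleton 1) hξ

/-- for every `x ∈ ℝ^K`, `Q ∈ Δ(L)^K`, `ζ ∈ ℝ^K` and every
evaluation `θ`, the dual game `𝒟[𝒢_θ](x,Q;ζ)` has a value: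
`w⁻_θ(x,Q;ζ) = w⁺_θ(x,Q;ζ)`. -/
theorem stmt_11
    {K L I J : Type*} [Fintype K] [Fintype L] [Fintype I] [Fintype J]
    [Nonempty K] [Nonempty L] [Nonempty I] [Nonempty J]
    (G : K → L → I → J → ℝ)
    (θ : ℕ → ℝ) (hθ0 : ∀ m, 0 ≤ θ m) (hθ1 : HasSum θ 1)
    (x : K → ℝ) (Q : K → L → ℝ) (hQ : ∀ k, Q k ∈ stdSimplex ℝ L)
    (ζ : K → ℝ) :
    wMinus (I := I) (J := J) θ G x Q ζ = wPlus (I := I) (J := J) θ G x Q ζ := by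
  exact stmt_11_general G hθ1.summable x Q ζ
end

section
/- (Independent case.) Assume θ_1 < 1. Let q∈Δ(L) and let Q_q∈Δ(L)^K be the constant transition Q_q(·|k) := q for all k; write w_θ(x,q) := w_θ(x,Q_q;𝟏). Then for every x∈ℝ^K: w_θ(x,q) = (1−θ_1)·min_{τ∈Δ(J)^L} min_{(x_{ij})∈(ℝ^K)^{I×J}, with Σ_{j∈J} τ̄(j)·x_{ij} = (x − θ_1·G^q_{iτ})/(1−θ_1) for every i∈I} max_{i∈I} Σ_{j∈J} τ̄(j)·w_{θ^+}(x_{ij}, q_j), where τ̄(j) := Σ_ℓ q^ℓ τ^ℓ(j), q_j∈Δ(L) is defined by q_j^ℓ := q^ℓτ^ℓ(j)/τ̄(j) when τ̄(j)>0 and q_j := q otherwise, w_{θ^+}(·,q_j) := w_{θ^+}(·,Q_{q_j};𝟏), and G^{k,q}_{iτ} := Σ_{ℓ,j} q^ℓ τ^ℓ(j) G^{kℓ}(i,j). -/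
open scoped BigOperators

/-!
Player 1's dual payoff against a fixed strategy of player 2 is affine in `p`, so a best reply can be
concentrated on one type. Hence, by compactness of the strategy space, the value `w_θ(x, Q; ζ)` is
the least `C` for which player 2 has a single strategy holding every type `k` to at most `x k + C`.

The best-reply payoff of a type satisfies a Bellman equation over the first stage. Splitting the
strategy of player 2 into a first mixed action `τ` and continuations, it yields both inequalities of
the recursion: optimal continuations in the games `(x_ij, q_j)` are glued to `τ`; conversely, from
an optimal strategy one takes for `x_ij` the vector of best-reply payoffs after `(i, j)`, shifted by
a vector independent of `j` so that the averages meet the constraint.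
-/

section Simplex

variable {A : Type*} [Fintype A]

lemma sum_mul_le_of_mem_stdSimplex {p f : A → ℝ} {C : ℝ} (hp : p ∈ stdSimplex ℝ A)
    (hf : ∀ a, f a ≤ C) : ∑ a, p a * f a ≤ C :=
  calc ∑ a, p a * f a ≤ ∑ a, p a * C :=
        Finset.sum_le_sum fun a _ => mul_le_mul_of_nonneg_left (hf a) (hp.1 a)
    _ = C := by rw [← Finset.sum_mul, hp.2, one_mul]

lemma abs_sum_mul_le_of_mem_stdSimplex {p f : A → ℝ} {C : ℝ} (hp : p ∈ stdSimplex ℝ A)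
    (hf : ∀ a, |f a| ≤ C) : |∑ a, p a * f a| ≤ C := by
  refine abs_le'.2 ⟨sum_mul_le_of_mem_stdSimplex hp fun a => (le_abs_self _).trans (hf a), ?_⟩
  rw [← Finset.sum_neg_distrib]
  simp_rw [← mul_neg]
  exact sum_mul_le_of_mem_stdSimplex hp fun a => (neg_le_abs _).trans (hf a)

lemma abs_sum_sum_mul_le_of_mem_stdSimplex {B : Type*} [Fintype B] {p : A → ℝ} {q : B → ℝ}
    {f : A → B → ℝ} {C : ℝ} (hp : p ∈ stdSimplex ℝ A) (hq : q ∈ stdSimplex ℝ B)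
    (hf : ∀ a b, |f a b| ≤ C) : |∑ a, ∑ b, p a * q b * f a b| ≤ C := by
  simp_rw [mul_assoc, ← Finset.mul_sum]
  exact abs_sum_mul_le_of_mem_stdSimplex hp fun a => abs_sum_mul_le_of_mem_stdSimplex hq (hf a)

lemma iSup_stdSimplex_prod_pi_sum_mul [Nonempty A] {S : Type*} [Nonempty S] {u : A → S → ℝ}
    (hu : ∀ a, BddAbove (Set.range (u a))) :
    ⨆ ps : stdSimplex ℝ A × (A → S), ∑ a, ps.1 a * u a (ps.2 a) = ⨆ a, ⨆ s, u a s := by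
  classical
  have hle (ps : stdSimplex ℝ A × (A → S)) :
      ∑ a, ps.1 a * u a (ps.2 a) ≤ ⨆ a, ⨆ s, u a s :=
    sum_mul_le_of_mem_stdSimplex ps.1.2 fun a =>
      (le_ciSup (hu a) (ps.2 a)).trans
        (le_ciSup (f := fun a => ⨆ s, u a s) (Finite.bddAbove_range _) a)
  refine le_antisymm (ciSup_le hle) (ciSup_le fun a => ciSup_le fun s => ?_)
  refine le_ciSup_of_le ⟨_, Set.forall_mem_range.2 hle⟩
    (⟨Pi.single a 1, single_mem_stdSimplex ℝ a⟩, fun _ => s) (le_of_eq ?_)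
  change u a s = ∑ b, Pi.single (M := fun _ => ℝ) a 1 b * u b s
  simp [Pi.single_apply]

end Simplex

section MaxOfContinuous

variable {S T : Type*} [TopologicalSpace S] [CompactSpace S] [TopologicalSpace T]

lemma exists_eq_iSup_of_continuous [Nonempty S] {f : S → ℝ} (hf : Continuous f) :
    ∃ s, f s = ⨆ s, f s := by
  obtain ⟨s, -, hs⟩ := isCompact_univ.exists_sSup_image_eq Set.univ_nonempty hf.continuousOn
  exact ⟨s, by rw [← hs, Set.image_univ, sSup_range]⟩

lemma continuous_iSup_of_compactSpace {f : T → S → ℝ}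
    (hf : Continuous fun ts : T × S => f ts.1 ts.2) : Continuous fun t => ⨆ s, f t s := by
  simpa only [Set.image_univ, sSup_range] using isCompact_univ.continuous_sSup hf

end MaxOfContinuous

section BehaviorStrategy

variable {I J A : Type*} [Fintype A]

/-- Strategies of a player of known type, with action set `A`: a mixed action after every history.
Being a product of simplices, this is a compact space. -/
abbrev BehaviorStrategy (I J A : Type*) [Fintype A] : Type _ :=
  List (I × J) → stdSimplex ℝ A

namespace BehaviorStrategy

/-- The strategy played from the second stage on, when the first stage resulted in `a`. -/
def continuation (s : BehaviorStrategy I J A) (a : I × J) : BehaviorStrategy I J A :=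
  fun h => s (a :: h)

/-- The strategy that plays `p` at the first stage and continues with `s a` after the first
action pair `a`. -/
def prepend (p : stdSimplex ℝ A) (s : I × J → BehaviorStrategy I J A) : BehaviorStrategy I J A
  | [] => p
  | a :: h => s a h

end BehaviorStrategy

/-- A strategy in the sense of `Strat` is a family of strategies indexed by the types. -/
def Strat.equivPi (I J X A : Type*) [Fintype A] :
    Strat I J X A ≃ (X → BehaviorStrategy I J A) where
  toFun f x h := ⟨f.1 x h, f.2 x h⟩
  invFun f := ⟨fun x h => f x h, fun x h => (f x h).2⟩

end BehaviorStrategy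

section StagePay

variable {I J : Type*}

lemma continuous_probH (h : List (I × J)) :
    Continuous fun st : (List (I × J) → I → ℝ) × (List (I × J) → J → ℝ) => probH st.1 st.2 h := by
  induction h with
  | nil => exact continuous_const
  | cons a h ih =>
    have continuous_continuations : Continuous
        fun st : (List (I × J) → I → ℝ) × (List (I × J) → J → ℝ) =>
          ((fun h' => st.1 (a :: h'), fun h' => st.2 (a :: h')) :
            (List (I × J) → I → ℝ) × (List (I × J) → J → ℝ)) := by
      fun_prop
    exact Continuous.mul (by fun_prop) (ih.comp continuous_continuations)

variable [Fintype I] [Fintype J]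

lemma stagePay_zero (s : List (I × J) → I → ℝ) (t : List (I × J) → J → ℝ) (g : I → J → ℝ) :
    stagePay s t g 0 = ∑ i, ∑ j, s [] i * t [] j * g i j := by
  simp [stagePay, probH]

lemma stagePay_succ (s : List (I × J) → I → ℝ) (t : List (I × J) → J → ℝ) (g : I → J → ℝ)
    (m : ℕ) :
    stagePay s t g (m + 1) = ∑ i, ∑ j, s [] i * t [] j *
      stagePay (fun h => s ((i, j) :: h)) (fun h => t ((i, j) :: h)) g m := by
  simp only [stagePay, Finset.mul_sum]
  rw [← (Fin.consEquiv fun _ : Fin (m + 1) => I × J).sum_comp, Fintype.sum_prod_type,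
    Fintype.sum_prod_type]
  simp [Fin.consEquiv, List.ofFn_succ, probH, mul_assoc]

lemma abs_stagePay_le (s : BehaviorStrategy I J I) (t : BehaviorStrategy I J J) (g : I → J → ℝ)
    (m : ℕ) : |stagePay (fun h => s h) (fun h => t h) g m| ≤ ‖g‖ := by
  induction m generalizing s t with
  | zero =>
    rw [stagePay_zero]
    exact abs_sum_sum_mul_le_of_mem_stdSimplex (s []).2 (t []).2 fun i j =>
      (norm_le_pi_norm (g i) j).trans (norm_le_pi_norm g i)
  | succ m ih =>
    rw [stagePay_succ]
    exact abs_sum_sum_mul_le_of_mem_stdSimplex (s []).2 (t []).2 fun i j =>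
      ih (s.continuation (i, j)) (t.continuation (i, j))

lemma continuous_stagePay (g : I → J → ℝ) (m : ℕ) :
    Continuous fun st : (List (I × J) → I → ℝ) × (List (I × J) → J → ℝ) =>
      stagePay st.1 st.2 g m :=
  continuous_finsetSum _ fun h _ => (continuous_probH (List.ofFn h)).mul (by fun_prop)

end StagePay

section WeightedPay

variable {I J : Type*} [Fintype I] [Fintype J] {θ : ℕ → ℝ}

/-- Total payoff, for a pair of known types with stage game `g`, when stage `m` has weight `θ m`. -/
noncomputable def weightedPay (θ : ℕ → ℝ) (g : I → J → ℝ) (s : BehaviorStrategy I J I)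
    (t : BehaviorStrategy I J J) : ℝ :=
  ∑' m, θ m * stagePay (fun h => s h) (fun h => t h) g m

lemma norm_mul_stagePay_le (θ : ℕ → ℝ) (g : I → J → ℝ) (s : BehaviorStrategy I J I)
    (t : BehaviorStrategy I J J) (m : ℕ) :
    ‖θ m * stagePay (fun h => s h) (fun h => t h) g m‖ ≤ |θ m| * ‖g‖ := by
  rw [norm_mul]
  exact mul_le_mul_of_nonneg_left (abs_stagePay_le s t g m) (norm_nonneg _)

lemma summable_mul_stagePay (hθ : Summable θ) (g : I → J → ℝ) (s : BehaviorStrategy I J I)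
    (t : BehaviorStrategy I J J) :
    Summable fun m => θ m * stagePay (fun h => s h) (fun h => t h) g m :=
  .of_norm_bounded (hθ.abs.mul_right ‖g‖) (norm_mul_stagePay_le θ g s t)

lemma continuous_weightedPay (hθ : Summable θ) (g : I → J → ℝ) :
    Continuous fun st : BehaviorStrategy I J I × BehaviorStrategy I J J =>
      weightedPay θ g st.1 st.2 := by
  have continuous_coe : Continuous fun st : BehaviorStrategy I J I × BehaviorStrategy I J J =>
      ((fun h => (st.1 h).1, fun h => (st.2 h).1) :
        (List (I × J) → I → ℝ) × (List (I × J) → J → ℝ)) := by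
    fun_prop
  exact continuous_tsum
    (fun m => continuous_const.mul ((continuous_stagePay g m).comp continuous_coe))
    (hθ.abs.mul_right ‖g‖) fun m st => norm_mul_stagePay_le θ g st.1 st.2 m

lemma summable_of_shift_eq_mul {θ' : ℕ → ℝ} {c : ℝ} (hθ : Summable θ) (hc : c ≠ 0)
    (hθ' : ∀ m, θ (m + 1) = c * θ' m) : Summable θ' :=
  (summable_mul_left_iff hc).1 <| by
    simpa only [← hθ'] using (summable_nat_add_iff 1).2 hθ

lemma weightedPay_eq_first_stage_add {θ' : ℕ → ℝ} {c : ℝ} (hθ : Summable θ)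
    (hc : c ≠ 0) (hθ' : ∀ m, θ (m + 1) = c * θ' m) (g : I → J → ℝ)
    (s : BehaviorStrategy I J I) (t : BehaviorStrategy I J J) :
    weightedPay θ g s t = ∑ i, ∑ j, s [] i * t [] j * (θ 0 * g i j +
      c * weightedPay θ' g (s.continuation (i, j)) (t.continuation (i, j))) := by
  have hasSum_continuation (i : I) (j : J) := (summable_mul_stagePay
    (summable_of_shift_eq_mul hθ hc hθ') g (s.continuation (i, j)) (t.continuation (i, j))).hasSum
  have hasSum_later_stages := hasSum_sum fun i (_ : i ∈ Finset.univ) =>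
    hasSum_sum fun j (_ : j ∈ Finset.univ) =>
      (hasSum_continuation i j).mul_left (s [] i * t [] j * c)
  have later_stage (m : ℕ) :
      θ (m + 1) * stagePay (fun h => s h) (fun h => t h) g (m + 1) =
        ∑ i, ∑ j, s [] i * t [] j * c * (θ' m * stagePay (fun h => s.continuation (i, j) h)
          (fun h => t.continuation (i, j) h) g m) := by
    rw [hθ', stagePay_succ]
    simp only [Finset.mul_sum]
    refine Finset.sum_congr rfl fun i _ => Finset.sum_congr rfl fun j _ => ?_
    simp only [BehaviorStrategy.continuation]
    ring
  rw [weightedPay, (summable_mul_stagePay hθ g s t).tsum_eq_zero_add, stagePay_zero,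
    tsum_congr later_stage, hasSum_later_stages.tsum_eq]
  simp only [weightedPay, mul_add, Finset.sum_add_distrib, Finset.mul_sum]
  congr 1 <;> refine Finset.sum_congr rfl fun i _ => Finset.sum_congr rfl fun j _ => by ring

end WeightedPay

section TypePayoff

variable {I J L : Type*} [Fintype I] [Fintype J] [Fintype L] {θ : ℕ → ℝ}

/-- Total payoff of one type of player 1 whose stage game against type `l` of player 2 is `g l`,
when the types of player 2 have weights `μ`. The weights are arbitrary reals, so that a factor
`ζ k` can be included in them. -/
noncomputable def typePayoff (θ : ℕ → ℝ) (g : L → I → J → ℝ) (μ : L → ℝ)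
    (s : BehaviorStrategy I J I) (t : L → BehaviorStrategy I J J) : ℝ :=
  ∑ l, μ l * weightedPay θ (g l) s (t l)

/-- The payoff `G^{k,q}_{iτ}` of action `i` against the mixed actions `τ`, for the weights `μ` on
the types of player 2. -/
def firstStagePayoff (g : L → I → J → ℝ) (μ : L → ℝ) (τ : L → J → ℝ) (i : I) : ℝ :=
  ∑ l, ∑ j, μ l * τ l j * g l i j

/-- Payoff of a best reply of one type of player 1 to the strategy `t` of player 2. -/
noncomputable def bestReplyPayoff (θ : ℕ → ℝ) (g : L → I → J → ℝ) (μ : L → ℝ)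
    (t : L → BehaviorStrategy I J J) : ℝ :=
  ⨆ s : BehaviorStrategy I J I, typePayoff θ g μ s t

lemma continuous_typePayoff (hθ : Summable θ) (g : L → I → J → ℝ) (μ : L → ℝ) :
    Continuous fun ts : (L → BehaviorStrategy I J J) × BehaviorStrategy I J I =>
      typePayoff θ g μ ts.2 ts.1 :=
  continuous_finsetSum _ fun l _ => continuous_const.mul <|
    (continuous_weightedPay hθ (g l)).comp (by fun_prop : Continuous fun
      ts : (L → BehaviorStrategy I J J) × BehaviorStrategy I J I => (ts.2, ts.1 l))

lemma continuous_typePayoff_left (hθ : Summable θ) (g : L → I → J → ℝ) (μ : L → ℝ)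
    (t : L → BehaviorStrategy I J J) :
    Continuous fun s : BehaviorStrategy I J I => typePayoff θ g μ s t :=
  (continuous_typePayoff hθ g μ).along_snd

lemma bddAbove_range_typePayoff (hθ : Summable θ) (g : L → I → J → ℝ) (μ : L → ℝ)
    (t : L → BehaviorStrategy I J J) :
    BddAbove (Set.range fun s : BehaviorStrategy I J I => typePayoff θ g μ s t) :=
  (isCompact_range (continuous_typePayoff_left hθ g μ t)).bddAbove

lemma typePayoff_le_bestReplyPayoff (hθ : Summable θ) (g : L → I → J → ℝ) (μ : L → ℝ)
    (s : BehaviorStrategy I J I) (t : L → BehaviorStrategy I J J) :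
    typePayoff θ g μ s t ≤ bestReplyPayoff θ g μ t :=
  le_ciSup (bddAbove_range_typePayoff hθ g μ t) s

lemma exists_typePayoff_eq_bestReplyPayoff [Nonempty I] (hθ : Summable θ) (g : L → I → J → ℝ)
    (μ : L → ℝ) (t : L → BehaviorStrategy I J J) :
    ∃ s : BehaviorStrategy I J I, typePayoff θ g μ s t = bestReplyPayoff θ g μ t :=
  exists_eq_iSup_of_continuous (continuous_typePayoff_left hθ g μ t)

lemma continuous_bestReplyPayoff (hθ : Summable θ) (g : L → I → J → ℝ) (μ : L → ℝ) :
    Continuous (bestReplyPayoff θ g μ) :=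
  continuous_iSup_of_compactSpace (continuous_typePayoff hθ g μ)

lemma exists_forall_iSup_bestReplyPayoff_sub_le {K : Type*} [Finite K] [Nonempty J]
    (hθ : Summable θ) (G : K → L → I → J → ℝ) (μ : K → L → ℝ) (x : K → ℝ) :
    ∃ t₀ : L → BehaviorStrategy I J J, ∀ t : L → BehaviorStrategy I J J,
      ⨆ k, (bestReplyPayoff θ (G k) (μ k) t₀ - x k) ≤
        ⨆ k, (bestReplyPayoff θ (G k) (μ k) t - x k) := by
  have lowerSemicontinuous_iSup : LowerSemicontinuous fun t : L → BehaviorStrategy I J J =>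
      ⨆ k, (bestReplyPayoff θ (G k) (μ k) t - x k) :=
    lowerSemicontinuous_ciSup (fun t => Finite.bddAbove_range _) fun k =>
      ((continuous_bestReplyPayoff hθ (G k) (μ k)).sub continuous_const).lowerSemicontinuous
  obtain ⟨t₀, -, ht₀⟩ := (lowerSemicontinuous_iSup.lowerSemicontinuousOn Set.univ).exists_isMinOn
    Set.univ_nonempty isCompact_univ
  exact ⟨t₀, fun t => ht₀ (Set.mem_univ t)⟩

section Recursion

variable {θ' : ℕ → ℝ} {c : ℝ} {μ : L → ℝ} {t : L → BehaviorStrategy I J J} {b : J → ℝ}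
  {ν : J → L → ℝ}

-- `hμ` disintegrates the weight of (type, action) over the action: `b` is the marginal, and `ν j`
-- the updated weights after `j`.
lemma typePayoff_eq_sum_first_stage_add (hθ : Summable θ) (hc : c ≠ 0)
    (hθ' : ∀ m, θ (m + 1) = c * θ' m) (hμ : ∀ l j, μ l * t l [] j = b j * ν j l)
    (g : L → I → J → ℝ) (s : BehaviorStrategy I J I) :
    typePayoff θ g μ s t = ∑ i, s [] i * (θ 0 * firstStagePayoff g μ (fun l => t l []) i +
      c * ∑ j, b j * typePayoff θ' g (ν j) (s.continuation (i, j))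
        fun l => (t l).continuation (i, j)) := by
  have typePayoff_continuation (i : I) :
      ∑ j, b j * typePayoff θ' g (ν j) (s.continuation (i, j))
        (fun l => (t l).continuation (i, j)) =
      ∑ l, ∑ j, μ l * t l [] j *
        weightedPay θ' (g l) (s.continuation (i, j)) ((t l).continuation (i, j)) := by
    simp only [typePayoff, Finset.mul_sum, hμ, ← mul_assoc]
    exact Finset.sum_comm
  simp only [typePayoff_continuation, firstStagePayoff]
  simp only [typePayoff, weightedPay_eq_first_stage_add hθ hc hθ', Finset.mul_sum,
    ← Finset.sum_add_distrib]
  rw [Finset.sum_comm]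
  refine Finset.sum_congr rfl fun i _ => Finset.sum_congr rfl fun l _ =>
    Finset.sum_congr rfl fun j _ => by ring

lemma bestReplyPayoff_eq_iSup [Nonempty I] (hθ : Summable θ) (hc : 0 < c)
    (hθ' : ∀ m, θ (m + 1) = c * θ' m) (hb : ∀ j, 0 ≤ b j)
    (hμ : ∀ l j, μ l * t l [] j = b j * ν j l) (g : L → I → J → ℝ) :
    bestReplyPayoff θ g μ t = ⨆ i, (θ 0 * firstStagePayoff g μ (fun l => t l []) i +
      c * ∑ j, b j * bestReplyPayoff θ' g (ν j) fun l => (t l).continuation (i, j)) := by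
  classical
  have summable_θ' := summable_of_shift_eq_mul hθ hc.ne' hθ'
  apply le_antisymm
  · refine ciSup_le fun s => ?_
    rw [typePayoff_eq_sum_first_stage_add hθ hc.ne' hθ' hμ]
    refine sum_mul_le_of_mem_stdSimplex (s []).2 fun i =>
      le_ciSup_of_le (Finite.bddAbove_range _) i ?_
    gcongr with j
    · exact hb j
    · exact typePayoff_le_bestReplyPayoff summable_θ' _ _ _ _
  · refine ciSup_le fun i => ?_
    choose r hr using fun j => exists_typePayoff_eq_bestReplyPayoff summable_θ' g (ν j)
      fun l => (t l).continuation (i, j)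
    let s : BehaviorStrategy I J I :=
      .prepend ⟨Pi.single i 1, single_mem_stdSimplex ℝ i⟩ fun a => r a.2
    refine le_trans (le_of_eq ?_) (typePayoff_le_bestReplyPayoff hθ g μ s t)
    have first_action (i' : I) : s [] i' = if i' = i then 1 else 0 :=
      Pi.single_apply (M := ℝ) i 1 i'
    have s_continuation (j : J) : s.continuation (i, j) = r j := rfl
    simp [typePayoff_eq_sum_first_stage_add hθ hc.ne' hθ' hμ, first_action, s_continuation, hr]

end Recursion

end TypePayoff

section DualGame

variable {I J K L : Type*} [Fintype I] [Fintype J] [Fintype K] [Fintype L] {θ : ℕ → ℝ}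

lemma hDual_eq_sum_mul_typePayoff_sub (θ : ℕ → ℝ) (G : K → L → I → J → ℝ) (x : K → ℝ)
    (Q : K → L → ℝ) (ζ p : K → ℝ) (s : Strat I J K I) (t : Strat I J L J) :
    hDual θ G x Q ζ p s t = ∑ k, p k * (typePayoff θ (G k) (ζ k • Q k)
      (Strat.equivPi I J K I s k) (Strat.equivPi I J L J t) - x k) := by
  simp only [mul_sub, Finset.sum_sub_distrib, typePayoff, Finset.mul_sum, Pi.smul_apply,
    smul_eq_mul]
  refine congrArg₂ _ (Finset.sum_congr rfl fun k _ => Finset.sum_congr rfl fun l _ => ?_) rfl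
  rw [← mul_assoc, mul_left_comm (p k), mul_comm (ζ k)]
  rfl

variable [Nonempty K] [Nonempty I]

lemma iSup_hDual_eq_iSup_bestReplyPayoff_sub (hθ : Summable θ) (G : K → L → I → J → ℝ)
    (x : K → ℝ) (Q : K → L → ℝ) (ζ : K → ℝ) (t : Strat I J L J) :
    ⨆ ps : stdSimplex ℝ K × Strat I J K I, hDual θ G x Q ζ ps.1 ps.2 t =
      ⨆ k, (bestReplyPayoff θ (G k) (ζ k • Q k) (Strat.equivPi I J L J t) - x k) := by
  have bddAbove_typePayoff (k : K) :=
    bddAbove_range_typePayoff hθ (G k) (ζ k • Q k) (Strat.equivPi I J L J t)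
  simp only [bestReplyPayoff, ciSup_sub (bddAbove_typePayoff _),
    hDual_eq_sum_mul_typePayoff_sub]
  rw [← iSup_stdSimplex_prod_pi_sum_mul fun k =>
    (bddAbove_typePayoff k).range_comp_left (fun _ _ h => sub_le_sub_right h (x k))]
  exact ((Equiv.refl _).prodCongr (Strat.equivPi I J K I)).iSup_congr fun _ => rfl

lemma wPlus_eq_iInf_iSup_bestReplyPayoff_sub (hθ : Summable θ) (G : K → L → I → J → ℝ)
    (x : K → ℝ) (Q : K → L → ℝ) (ζ : K → ℝ) :
    wPlus θ G x Q ζ = ⨅ t : L → BehaviorStrategy I J J,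
      ⨆ k, (bestReplyPayoff θ (G k) (ζ k • Q k) t - x k) :=
  (Strat.equivPi I J L J).iInf_congr fun t =>
    (iSup_hDual_eq_iSup_bestReplyPayoff_sub hθ G x Q ζ t).symm

lemma wPlus_le_iff [Nonempty J] (hθ : Summable θ) {G : K → L → I → J → ℝ} {x : K → ℝ}
    {Q : K → L → ℝ} {ζ : K → ℝ} {C : ℝ} :
    wPlus θ G x Q ζ ≤ C ↔ ∃ t : L → BehaviorStrategy I J J,
      ∀ k, bestReplyPayoff θ (G k) (ζ k • Q k) t ≤ x k + C := by
  obtain ⟨t₀, ht₀⟩ := exists_forall_iSup_bestReplyPayoff_sub_le hθ G (fun k => ζ k • Q k) x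
  have iSup_le_iff (t : L → BehaviorStrategy I J J) :
      ⨆ k, (bestReplyPayoff θ (G k) (ζ k • Q k) t - x k) ≤ C ↔
        ∀ k, bestReplyPayoff θ (G k) (ζ k • Q k) t ≤ x k + C := by
    simp only [ciSup_le_iff (Finite.bddAbove_range _), sub_le_iff_le_add']
  simp only [← iSup_le_iff, wPlus_eq_iInf_iSup_bestReplyPayoff_sub hθ]
  exact ⟨fun h => ⟨t₀, (le_ciInf ht₀).trans h⟩,
    fun ⟨t, ht⟩ => (ciInf_le ⟨_, Set.forall_mem_range.2 ht₀⟩ t).trans ht⟩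

end DualGame

section Bayes

variable {J L : Type*} [Fintype L]

/-- The law `τ̄` of the action of player 2 when its type has law `q` and type `l` plays `τ l`. -/
def actionMarginal (q : L → ℝ) (τ : L → J → ℝ) (j : J) : ℝ :=
  ∑ l, q l * τ l j

/-- The law `q_j` of the type of player 2 given its action `j`; by convention the prior `q` when
`j` has probability zero. -/
noncomputable def typePosterior (q : L → ℝ) (τ : L → J → ℝ) (j : J) (l : L) : ℝ :=
  if 0 < actionMarginal q τ j then q l * τ l j / actionMarginal q τ j else q l

lemma actionMarginal_mem_stdSimplex [Fintype J] {q : L → ℝ} {τ : L → J → ℝ}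
    (hq : q ∈ stdSimplex ℝ L) (hτ : ∀ l, τ l ∈ stdSimplex ℝ J) :
    actionMarginal q τ ∈ stdSimplex ℝ J := by
  refine ⟨fun j => Finset.sum_nonneg fun l _ => mul_nonneg (hq.1 l) ((hτ l).1 j), ?_⟩
  simp only [actionMarginal]
  rw [Finset.sum_comm]
  simp only [← Finset.mul_sum, (hτ _).2, mul_one, hq.2]

lemma actionMarginal_mul_typePosterior {q : L → ℝ} {τ : L → J → ℝ} (hq : ∀ l, 0 ≤ q l)
    (hτ : ∀ l j, 0 ≤ τ l j) (j : J) (l : L) :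
    actionMarginal q τ j * typePosterior q τ j l = q l * τ l j := by
  have joint_nonneg (l : L) : 0 ≤ q l * τ l j := mul_nonneg (hq l) (hτ l j)
  rw [typePosterior]
  split_ifs with h
  · exact mul_div_cancel₀ _ h.ne'
  · have marginal_eq_zero : actionMarginal q τ j = 0 :=
      le_antisymm (not_lt.1 h) (Finset.sum_nonneg fun l _ => joint_nonneg l)
    rw [marginal_eq_zero, zero_mul]
    exact ((Finset.sum_eq_zero_iff_of_nonneg fun l _ => joint_nonneg l).1 marginal_eq_zero l
      (Finset.mem_univ l)).symm

end Bayes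

section DualRecursion

variable {I J K L : Type*} [Fintype I] [Fintype J] [Fintype K] [Fintype L] [Nonempty K]
  [Nonempty I] {θ θ' : ℕ → ℝ} {c : ℝ} {q : L → ℝ}

lemma bestReplyPayoff_le_iff (hθ : Summable θ) (hc : 0 < c) (hθ' : ∀ m, θ (m + 1) = c * θ' m)
    (hq : q ∈ stdSimplex ℝ L) (g : L → I → J → ℝ) (z : ℝ) (t : L → BehaviorStrategy I J J)
    {C : ℝ} :
    bestReplyPayoff θ g (z • q) t ≤ C ↔
      ∀ i, θ 0 * firstStagePayoff g (z • q) (fun l => t l []) i +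
        c * ∑ j, actionMarginal q (fun l => t l []) j *
          bestReplyPayoff θ' g (z • typePosterior q (fun l => t l []) j)
            (fun l => (t l).continuation (i, j)) ≤ C := by
  have marginal_nonneg : ∀ j, 0 ≤ actionMarginal q (fun l => t l []) j :=
    (actionMarginal_mem_stdSimplex hq fun l => (t l []).2).1
  have disintegration (l : L) (j : J) : (z • q) l * t l [] j =
      actionMarginal q (fun l => t l []) j * (z • typePosterior q (fun l => t l []) j) l := by
    rw [Pi.smul_apply, Pi.smul_apply, smul_eq_mul, smul_eq_mul, mul_assoc, mul_left_comm _ z]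
    exact congrArg (z * ·)
      (actionMarginal_mul_typePosterior hq.1 (fun l => (t l []).2.1) j l).symm
  rw [bestReplyPayoff_eq_iSup hθ hc hθ' marginal_nonneg disintegration,
    ciSup_le_iff (Finite.bddAbove_range _)]

variable [Nonempty J]

lemma wPlus_le_mul_iSup_of_average_eq (hθ : Summable θ) (hc : 0 < c)
    (hθ' : ∀ m, θ (m + 1) = c * θ' m) (hq : q ∈ stdSimplex ℝ L) {G : K → L → I → J → ℝ}
    {ζ x : K → ℝ} {τ : L → J → ℝ} (hτ : ∀ l, τ l ∈ stdSimplex ℝ J) {xf : I → J → K → ℝ}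
    (hxf : ∀ i k, ∑ j, actionMarginal q τ j * xf i j k =
      (x k - θ 0 * firstStagePayoff (G k) (ζ k • q) τ i) / c) :
    wPlus θ G x (fun _ => q) ζ ≤ c * ⨆ i, ∑ j, actionMarginal q τ j *
      wPlus θ' G (xf i j) (fun _ => typePosterior q τ j) ζ := by
  have summable_θ' := summable_of_shift_eq_mul hθ hc.ne' hθ'
  choose T hT using fun i j => (wPlus_le_iff summable_θ').1
    (le_refl (wPlus θ' G (xf i j) (fun _ => typePosterior q τ j) ζ))
  let t (l : L) : BehaviorStrategy I J J := .prepend ⟨τ l, hτ l⟩ fun a => T a.1 a.2 l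
  refine (wPlus_le_iff hθ).2 ⟨t, fun k => (bestReplyPayoff_le_iff hθ hc hθ' hq _ _ t).2 fun i => ?_⟩
  calc θ 0 * firstStagePayoff (G k) (ζ k • q) τ i + c * ∑ j, actionMarginal q τ j *
          bestReplyPayoff θ' (G k) (ζ k • typePosterior q τ j) (T i j)
      ≤ θ 0 * firstStagePayoff (G k) (ζ k • q) τ i + c * ∑ j, actionMarginal q τ j *
          (xf i j k + wPlus θ' G (xf i j) (fun _ => typePosterior q τ j) ζ) := by
        gcongr with j
        · exact (actionMarginal_mem_stdSimplex hq hτ).1 j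
        · exact hT i j k
    _ = x k + c * ∑ j, actionMarginal q τ j *
          wPlus θ' G (xf i j) (fun _ => typePosterior q τ j) ζ := by
        simp only [mul_add, Finset.sum_add_distrib, hxf]
        field_simp
        ring
    _ ≤ _ := by
        gcongr
        exact le_ciSup (f := fun i => ∑ j, actionMarginal q τ j *
          wPlus θ' G (xf i j) (fun _ => typePosterior q τ j) ζ) (Finite.bddAbove_range _) i

lemma exists_average_eq_and_iSup_le_wPlus_div (hθ : Summable θ) (hc : 0 < c)
    (hθ' : ∀ m, θ (m + 1) = c * θ' m) (hq : q ∈ stdSimplex ℝ L) (G : K → L → I → J → ℝ)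
    (ζ x : K → ℝ) :
    ∃ τ : L → J → ℝ, (∀ l, τ l ∈ stdSimplex ℝ J) ∧ ∃ xf : I → J → K → ℝ,
      (∀ i k, ∑ j, actionMarginal q τ j * xf i j k =
        (x k - θ 0 * firstStagePayoff (G k) (ζ k • q) τ i) / c) ∧
      ⨆ i, ∑ j, actionMarginal q τ j *
        wPlus θ' G (xf i j) (fun _ => typePosterior q τ j) ζ ≤
          wPlus θ G x (fun _ => q) ζ / c := by
  obtain ⟨t, ht⟩ := (wPlus_le_iff hθ).1 (le_refl (wPlus θ G x (fun _ => q) ζ))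
  let τ (l : L) : J → ℝ := t l []
  let R (i : I) (j : J) (k : K) : ℝ := bestReplyPayoff θ' (G k) (ζ k • typePosterior q τ j)
    fun l => (t l).continuation (i, j)
  -- The excess of the average best-reply payoff over its target is removed equally at all `j`.
  let D (i : I) (k : K) : ℝ := ∑ j, actionMarginal q τ j * R i j k -
    (x k - θ 0 * firstStagePayoff (G k) (ζ k • q) τ i) / c
  have marginal_mem : actionMarginal q τ ∈ stdSimplex ℝ J :=
    actionMarginal_mem_stdSimplex hq fun l => (t l []).2
  have D_le (i : I) (k : K) : D i k ≤ wPlus θ G x (fun _ => q) ζ / c := by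
    have first_stage_le : θ 0 * firstStagePayoff (G k) (ζ k • q) τ i +
        c * ∑ j, actionMarginal q τ j * R i j k ≤ x k + wPlus θ G x (fun _ => q) ζ :=
      (bestReplyPayoff_le_iff hθ hc hθ' hq _ _ t).1 (ht k) i
    rw [sub_le_iff_le_add, ← add_div, le_div_iff₀' hc]
    linarith
  refine ⟨τ, fun l => (t l []).2, fun i j k => R i j k - D i k, fun i k => ?_,
    ciSup_le fun i => sum_mul_le_of_mem_stdSimplex marginal_mem fun j => ?_⟩
  · simp only [mul_sub, Finset.sum_sub_distrib, ← Finset.sum_mul]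
    rw [marginal_mem.2, one_mul, sub_sub_cancel]
  · refine (wPlus_le_iff (summable_of_shift_eq_mul hθ hc.ne' hθ')).2
      ⟨fun l => (t l).continuation (i, j), fun k => ?_⟩
    change R i j k ≤ R i j k - D i k + _
    linarith [D_le i k]

theorem stmt_18_general (hθ : Summable θ) (hc : 0 < c)
    (hθ' : ∀ m, θ (m + 1) = c * θ' m) (hq : q ∈ stdSimplex ℝ L) (G : K → L → I → J → ℝ)
    (ζ x : K → ℝ) :
    IsLeast
      {r : ℝ | ∃ τ : L → J → ℝ, (∀ l, τ l ∈ stdSimplex ℝ J) ∧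
        ∃ xf : I → J → K → ℝ,
          (∀ i k, ∑ j, actionMarginal q τ j * xf i j k =
            (x k - θ 0 * firstStagePayoff (G k) (ζ k • q) τ i) / c) ∧
          r = ⨆ i, ∑ j, actionMarginal q τ j *
            wPlus θ' G (xf i j) (fun _ => typePosterior q τ j) ζ}
      (wPlus θ G x (fun _ => q) ζ / c) := by
  constructor
  · obtain ⟨τ, hτ, xf, hxf, iSup_le⟩ :=
      exists_average_eq_and_iSup_le_wPlus_div hθ hc hθ' hq G ζ x
    exact ⟨τ, hτ, xf, hxf, le_antisymm
      ((div_le_iff₀' hc).2 (wPlus_le_mul_iSup_of_average_eq hθ hc hθ' hq hτ hxf)) iSup_le⟩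
  · rintro r ⟨τ, hτ, xf, hxf, rfl⟩
    exact (div_le_iff₀' hc).2 (wPlus_le_mul_iSup_of_average_eq hθ hc hθ' hq hτ hxf)

end DualRecursion

/-- independent case, De Meyer–Marino: for `q ∈ Δ(L)` and the
constant transition `Q_q(·|k) := q`, writing `w_θ(x,q) := w_θ(x,Q_q;𝟏)`:
`w_θ(x,q) = (1−θ_1)·min_τ min_{(x_{ij}) : Σ_j τ̄(j)x_{ij} = (x−θ_1G^q_{iτ})/(1−θ_1) ∀i}
max_i Σ_j τ̄(j)·w_{θ⁺}(x_{ij},q_j)`, the minimum being attained.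
Here `τ̄(j) = Σ_ℓ q^ℓτ^ℓ(j)`, `q_j^ℓ = q^ℓτ^ℓ(j)/τ̄(j)` (with fallback `q`
when `τ̄(j) = 0`).  Stages are indexed from `0` (so `θ 0 = θ_1`); the value of
the dual game is its minmax `wPlus`; maxima over the finite set `I` are written
as suprema. -/
theorem stmt_18
    {K L I J : Type*} [Fintype K] [Fintype L] [Fintype I] [Fintype J]
    [Nonempty K] [Nonempty L] [Nonempty I] [Nonempty J]
    (G : K → L → I → J → ℝ)
    (θ : ℕ → ℝ) (hθ0 : ∀ m, 0 ≤ θ m) (hθ1 : HasSum θ 1) (hθlt : θ 0 < 1)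
    (θplus : ℕ → ℝ) (hθplus : ∀ m, θplus m = θ (m + 1) / (1 - θ 0))
    (x : K → ℝ) (q : L → ℝ) (hq : q ∈ stdSimplex ℝ L)
    (τbar : (L → J → ℝ) → J → ℝ)
    (hτbar : ∀ τ j, τbar τ j = ∑ l, q l * τ l j)
    (qj : (L → J → ℝ) → J → L → ℝ)
    (hqj : ∀ τ j l, qj τ j l =
      if 0 < τbar τ j then q l * τ l j / τbar τ j else q l)
    (Gq : (L → J → ℝ) → I → K → ℝ)
    (hGq : ∀ τ i k, Gq τ i k = ∑ l, ∑ j, q l * τ l j * G k l i j) :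
    ∃ c : ℝ,
      IsLeast
        {r : ℝ | ∃ τ : L → J → ℝ, (∀ l, τ l ∈ stdSimplex ℝ J) ∧
          ∃ xf : I → J → K → ℝ,
            (∀ i k, (∑ j, τbar τ j * xf i j k) =
              (x k - θ 0 * Gq τ i k) / (1 - θ 0)) ∧
            r = ⨆ i, ∑ j, τbar τ j *
              wPlus θplus G (xf i j) (fun _ l => qj τ j l) (fun _ => 1)} c ∧
      wPlus (I := I) (J := J) θ G x (fun _ l => q l) (fun _ => 1) =
        (1 - θ 0) * c := by
  have hc : 0 < 1 - θ 0 := sub_pos.2 hθlt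
  obtain rfl : τbar = actionMarginal q := funext₂ hτbar
  obtain rfl : qj = typePosterior q := by ext; exact hqj ..
  obtain rfl : Gq = fun τ i k => firstStagePayoff (G k) q τ i := by ext; exact hGq ..
  refine ⟨wPlus θ G x (fun _ => q) (fun _ => 1) / (1 - θ 0), ?_, (mul_div_cancel₀ _ hc.ne').symm⟩
  simpa only [one_smul] using stmt_18_general hθ1.summable hc
    (fun m => by rw [hθplus, mul_div_cancel₀ _ hc.ne']) hq G (fun _ => 1) x
end
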